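/- For every integer K ≥ 3 and every integer T with T > 108·log(K) there exists a fixed-budget strategy π with horizon T (the PD-CTB algorithm, which uses no knowledge of σ or of the gaps) such that for every σ > 0 and every σ²-sub-Gaussian K-armed bandit problem ν whose means (μ_k)_{k=1}^K form a concave sequence, the probability of error satisfies e_T^{ν,π} ≤ 3·exp(−(1/576)·T·Δ_min²/σ² + 12·log(K)), where Δ_min = min_{k∈[K]} |μ_k − τ|. -/

import Mathlib

open MeasureTheory

/-- Law of the history `(Y_1, …, Y_n)` of a fixed-budget strategy: at round `t + 1`, given
the past history `h : Fin t → ℝ`, the sampling rule `π` selects the arm `π t h` and the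
observation is drawn from `ν (π t h)` (sequential / Ionescu–Tulcea composition). -/
noncomputable def histMeasure {K : ℕ} (ν : Fin K → Measure ℝ)
    (π : (t : ℕ) → (Fin t → ℝ) → Fin K) : (n : ℕ) → Measure (Fin n → ℝ)
  | 0 => Measure.dirac (fun i => Fin.elim0 i)
  | n + 1 => (histMeasure ν π n).bind (fun h => (ν (π n h)).map (Fin.snoc h))

/-- The error event: some arm is misclassified. `Qhat y k = true` encodes the label `+1`
(i.e. the prediction that `μ k ≥ τ`), `false` encodes the label `-1`. -/
def errSet {K T : ℕ} (Qhat : (Fin T → ℝ) → Fin K → Bool) (μ : Fin K → ℝ) (τ : ℝ) :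
    Set (Fin T → ℝ) :=
  {y | ∃ k, (Qhat y k = true) ≠ (τ ≤ μ k)}

/-- A distribution `ν` with mean `m` is `σ2`-sub-Gaussian if
`∫ exp (t (x − m)) dν(x) ≤ exp (σ2 t² / 2)` for all `t : ℝ`. -/
def IsSubGaussianArm (σ2 : ℝ) (m : ℝ) (ν : Measure ℝ) : Prop :=
  ∀ t : ℝ, ∫⁻ x, ENNReal.ofReal (Real.exp (t * (x - m))) ∂ν ≤
    ENNReal.ofReal (Real.exp (σ2 * t ^ 2 / 2))

/-- A finite sequence `(μ_k)_{k=1}^K` is concave if `μ_{k-1} + μ_{k+1} ≤ 2 μ_k`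
for all `1 < k < K` (here stated with 0-based indices). -/
def ConcaveSeq {K : ℕ} (μ : Fin K → ℝ) : Prop :=
  ∀ (i : ℕ) (h : i + 2 < K),
    μ ⟨i, by omega⟩ + μ ⟨i + 2, h⟩ ≤ 2 * μ ⟨i + 1, by omega⟩

/-!
The arms above the threshold of a concave sequence form an interval, so it suffices to find the
last of them and, by reversing the order of the arms, the first. Each is found by a noisy binary
search, which queries a weighted median arm `x` and a weighted median `s` of the distances to `x`,
an arm contradicted by `j` answers having weight `4⁻ʲ`. If `x` looks above the threshold, its right
neighbour is tested. Otherwise concavity supplies the direction: the linear extrapolation through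
the arms at `x - s` and `x` bounds the arms up to `x + s` from above, and symmetrically. If exactly
one of the two extrapolations reaches the threshold, the target lies on that side; if both do, it is
nearer to `x` than `s`, and if neither does, farther away.

Every answer multiplies the potential (total weight) · (5/8)^(number of votes) by at most 5/8, so if
fewer than `m = ⌊log₂ K⌋` of `6 * m` answers are misleading, then the target is the only arm to
collect `m` votes. In a misleading round the noise deviates by at least `Δ_min` in one of three
directions, of squared norm at most 3 and determined by the past. For a fixed choice of a direction
or of none in each round, the exponential supermartingale bounds the probability of `m` such
deviations, and a union bound over the `4 ^ (6 * m) ≤ K ^ 12` choices finishes the proof.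
-/

/-! ### Concave sequences -/

namespace ConcaveSeq

open Finset

variable {K : ℕ} {μ : Fin K → ℝ}

lemma rev (hμ : ConcaveSeq μ) : ConcaveSeq (μ ∘ Fin.rev) := by
  intro i hi
  have mirrored := hμ (K - (i + 3)) (by omega)
  have h₀ : Fin.rev (⟨i, by omega⟩ : Fin K) = ⟨K - (i + 3) + 2, by omega⟩ := by
    ext; simp only [Fin.val_rev]; omega
  have h₁ : Fin.rev (⟨i + 1, by omega⟩ : Fin K) = ⟨K - (i + 3) + 1, by omega⟩ := by
    ext; simp only [Fin.val_rev]; omega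
  have h₂ : Fin.rev (⟨i + 2, hi⟩ : Fin K) = ⟨K - (i + 3), by omega⟩ := by
    ext; simp only [Fin.val_rev]
  simp only [Function.comp_apply, h₀, h₁, h₂]
  linarith

lemma slope_le_slope (hμ : ConcaveSeq μ) {i j k : Fin K} (hij : i ≤ j) (hjk : j ≤ k) :
    ((j : ℝ) - i) * (μ k - μ j) ≤ ((k : ℝ) - j) * (μ j - μ i) := by
  obtain rfl | hjk := hjk.eq_or_lt
  · simp
  let f (q : ℕ) : ℝ := if h : q < K then μ ⟨q, h⟩ else 0
  have f_coe (q : Fin K) : f q = μ q := dif_pos q.2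
  have increment_antitone : AntitoneOn (fun q ↦ f (q + 1) - f q) (Set.Iio (K - 1)) := by
    refine antitoneOn_of_succ_le Set.ordConnected_Iio fun q _ _ hq ↦ ?_
    have hq : q + 2 < K := by simp only [Nat.succ_eq_succ, Set.mem_Iio] at hq; omega
    have := hμ q hq
    simp only [Nat.succ_eq_succ, Nat.succ_eq_add_one, f, hq, show q + 1 < K by omega,
      show q < K by omega, dif_pos]
    linarith
  have mem {q : ℕ} (hq : q < k) : q ∈ Set.Iio (K - 1) := by have := k.2; simp; omega
  set d := f (j + 1) - f j
  have right : μ k - μ j ≤ (k - j) * d := by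
    calc μ k - μ j = ∑ q ∈ Ico (j : ℕ) k, (f (q + 1) - f q) := by
          rw [sum_Ico_sub f hjk.le, f_coe, f_coe]
      _ ≤ ∑ _q ∈ Ico (j : ℕ) k, d := sum_le_sum fun q hq ↦
          increment_antitone (mem hjk) (mem (mem_Ico.1 hq).2) (mem_Ico.1 hq).1
      _ = (k - j) * d := by simp [Nat.cast_sub (Fin.val_fin_le.2 hjk.le)]
  have left : (j - i) * d ≤ μ j - μ i := by
    calc (j - i) * d = ∑ _q ∈ Ico (i : ℕ) j, d := by simp [Nat.cast_sub (Fin.val_fin_le.2 hij)]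
      _ ≤ ∑ q ∈ Ico (i : ℕ) j, (f (q + 1) - f q) := sum_le_sum fun q hq ↦
          increment_antitone (mem ((mem_Ico.1 hq).2.trans hjk)) (mem hjk) (mem_Ico.1 hq).2.le
      _ = μ j - μ i := by rw [sum_Ico_sub f hij, f_coe, f_coe]
  have hij : (0 : ℝ) ≤ j - i := sub_nonneg.2 (by exact_mod_cast hij)
  have hjk : (0 : ℝ) ≤ k - j := sub_nonneg.2 (by exact_mod_cast hjk.le)
  calc ((j : ℝ) - i) * (μ k - μ j) ≤ (j - i) * ((k - j) * d) := by gcongr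
    _ = (k - j) * ((j - i) * d) := by ring
    _ ≤ (k - j) * (μ j - μ i) := by gcongr

lemma ordConnected_superlevel (hμ : ConcaveSeq μ) (c : ℝ) : {k | c ≤ μ k}.OrdConnected := by
  refine ⟨fun i hi k hk j ⟨hij, hjk⟩ ↦ ?_⟩
  obtain rfl | hjk' := hjk.eq_or_lt
  · exact hk
  by_contra hj
  have slope := hμ.slope_le_slope hij hjk
  simp only [Set.mem_ofPred_eq, not_le] at hi hk hj
  have hij : (0 : ℝ) ≤ j - i := sub_nonneg.2 (by exact_mod_cast hij)
  have hjk : (0 : ℝ) < k - j := sub_pos.2 (by exact_mod_cast hjk')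
  have : 0 ≤ ((j : ℝ) - i) * (μ k - μ j) := mul_nonneg hij (by linarith)
  have : ((k : ℝ) - j) * (μ j - μ i) < 0 := mul_neg_of_pos_of_neg hjk (by linarith)
  linarith

lemma le_extrapolation (hμ : ConcaveSeq μ) {z x k : Fin K} (hxk : x < k)
    (hz : (k : ℕ) + z ≤ 2 * x) (hle : μ x ≤ μ k) : μ k ≤ 2 * μ x - μ z := by
  have hzx : z ≤ x := by rw [Fin.le_def]; omega
  have slope := hμ.slope_le_slope hzx hxk.le
  have hxk : (0 : ℝ) < k - x := sub_pos.2 (by exact_mod_cast hxk)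
  have hz : (k : ℝ) - x ≤ x - z := by
    have : (k : ℝ) + z ≤ 2 * x := by exact_mod_cast hz
    linarith
  have : ((k : ℝ) - x) * (μ k - μ x) ≤ (k - x) * (μ x - μ z) :=
    (mul_le_mul_of_nonneg_right hz (sub_nonneg.2 hle)).trans slope
  linarith [le_of_mul_le_mul_left this hxk]

lemma le_extrapolation_left (hμ : ConcaveSeq μ) {z x k : Fin K} (hkx : k < x)
    (hz : 2 * (x : ℕ) ≤ k + z) (hle : μ x ≤ μ k) : μ k ≤ 2 * μ x - μ z := by
  have mirrored := hμ.rev.le_extrapolation (z := z.rev) (x := x.rev) (k := k.rev)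
    (Fin.rev_lt_rev.2 hkx) (by simp only [Fin.val_rev]; omega)
  simp only [Function.comp_apply, Fin.rev_rev] at mirrored
  exact mirrored hle

end ConcaveSeq

namespace ConcaveBandit

open Finset

/-! ### Sequential sampling -/

section Past

variable {α β : Type*} [MeasurableSpace α] [MeasurableSpace β]

/-- `PastMeasurable t f`: the statistic `f` of a stream of observations is a measurable function
of the first `t` observations. A process `f t` is predictable when `PastMeasurable t (f t)` for
all `t`. Strategies are studied on infinite streams so that the type of a history does not
change with time. -/
structure PastMeasurable (t : ℕ) (f : (ℕ → ℝ) → α) : Prop where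
  measurable : Measurable f
  dependsOn : DependsOn f (Set.Iio t)

namespace PastMeasurable

variable {s t : ℕ} {f : (ℕ → ℝ) → α}

lemma mono (hst : s ≤ t) (hf : PastMeasurable s f) : PastMeasurable t f :=
  ⟨hf.measurable, hf.dependsOn.mono (Set.Iio_subset_Iio hst)⟩

lemma const (t : ℕ) (a : α) : PastMeasurable t fun _ ↦ a :=
  ⟨measurable_const, (dependsOn_const a).mono (Set.empty_subset _)⟩

lemma eval (hst : s < t) : PastMeasurable t fun y ↦ y s :=
  ⟨measurable_pi_apply s, fun _ _ h ↦ h s hst⟩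

lemma comp {g : α → β} (hg : Measurable g) (hf : PastMeasurable t f) :
    PastMeasurable t fun y ↦ g (f y) :=
  ⟨hg.comp hf.measurable, fun _ _ h ↦ congrArg g (hf.dependsOn h)⟩

lemma prodMk {g : (ℕ → ℝ) → β} (hf : PastMeasurable t f) (hg : PastMeasurable t g) :
    PastMeasurable t fun y ↦ (f y, g y) :=
  ⟨hf.measurable.prodMk hg.measurable,
    fun _ _ h ↦ Prod.ext (hf.dependsOn h) (hg.dependsOn h)⟩

lemma pi {ι : Type*} {g : ι → (ℕ → ℝ) → α} (hg : ∀ i, PastMeasurable t (g i)) :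
    PastMeasurable t fun y i ↦ g i y :=
  ⟨measurable_pi_lambda _ fun i ↦ (hg i).measurable, fun _ _ h ↦ funext fun i ↦ (hg i).dependsOn h⟩

lemma sum {ι : Type*} {I : Finset ι} {g : ι → (ℕ → ℝ) → ℝ}
    (hg : ∀ i ∈ I, PastMeasurable t (g i)) : PastMeasurable t fun y ↦ ∑ i ∈ I, g i y :=
  ⟨Finset.measurable_sum I fun i hi ↦ (hg i hi).measurable,
    fun _ _ h ↦ Finset.sum_congr rfl fun i hi ↦ (hg i hi).dependsOn h⟩

lemma comp_stream {φ : (ℕ → ℝ) → ℕ → ℝ} (hf : PastMeasurable s f)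
    (hφ : ∀ i < s, PastMeasurable t fun y ↦ φ y i) (hφ' : Measurable φ) :
    PastMeasurable t fun y ↦ f (φ y) :=
  ⟨hf.measurable.comp hφ', fun _ _ h ↦ hf.dependsOn fun i hi ↦ (hφ i hi).dependsOn h⟩

end PastMeasurable

end Past

/-- Continues a history by zeros to a stream of observations. -/
def extendByZero {t : ℕ} (h : Fin t → ℝ) (i : ℕ) : ℝ := if hi : i < t then h ⟨i, hi⟩ else 0

lemma measurable_extendByZero {t : ℕ} : Measurable (extendByZero (t := t)) := by
  refine measurable_pi_lambda _ fun i ↦ ?_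
  by_cases hi : i < t
  · simpa only [extendByZero, hi, dif_pos] using measurable_pi_apply _
  · simp only [extendByZero, hi, dif_neg, not_false_eq_true, measurable_const]

lemma extendByZero_snoc_of_lt {t i : ℕ} (h : Fin t → ℝ) (x : ℝ) (hi : i < t) :
    extendByZero (Fin.snoc h x : Fin (t + 1) → ℝ) i = extendByZero h i := by
  simp [extendByZero, hi, hi.trans t.lt_succ_self, Fin.snoc]

lemma extendByZero_snoc_self {t : ℕ} (h : Fin t → ℝ) (x : ℝ) :
    extendByZero (Fin.snoc h x : Fin (t + 1) → ℝ) t = x := by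
  simp [extendByZero, Fin.snoc]

lemma PastMeasurable.apply_extendByZero_snoc {α : Type*} [MeasurableSpace α] {s t : ℕ}
    {f : (ℕ → ℝ) → α} (hf : PastMeasurable s f) (hst : s ≤ t) (h : Fin t → ℝ) (x : ℝ) :
    f (extendByZero (Fin.snoc h x : Fin (t + 1) → ℝ)) = f (extendByZero h) :=
  hf.dependsOn fun _ hi ↦ extendByZero_snoc_of_lt h x (lt_of_lt_of_le hi hst)

/-- The sampling rule that plays the arm `a t y` at time `t`, where `y` is any stream continuing
the history. -/
def streamStrategy {K : ℕ} (a : ℕ → (ℕ → ℝ) → Fin K) (t : ℕ) (h : Fin t → ℝ) : Fin K :=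
  a t (extendByZero h)

lemma measurable_snoc {t : ℕ} :
    Measurable fun p : (Fin t → ℝ) × ℝ ↦ (Fin.snoc p.1 p.2 : Fin (t + 1) → ℝ) := by
  refine measurable_pi_lambda _ fun i ↦ Fin.lastCases ?_ (fun j ↦ ?_) i
  · simpa only [Fin.snoc_last] using measurable_snd
  · simpa only [Fin.snoc_castSucc] using measurable_fst.eval

lemma measurable_map_snoc {K t : ℕ} (ν : Fin K → Measure ℝ) [∀ k, SFinite (ν k)]
    {p : (Fin t → ℝ) → Fin K} (hp : Measurable p) :
    Measurable fun h : Fin t → ℝ ↦ (ν (p h)).map (Fin.snoc (α := fun _ ↦ ℝ) h) := by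
  have joint : Measurable fun q : Fin K × (Fin t → ℝ) ↦
      (ν q.1).map (Fin.snoc (α := fun _ ↦ ℝ) q.2) := by
    refine measurable_from_prod_countable_right fun k ↦ ?_
    have := (Measure.measurable_map _ measurable_snoc).comp
      (Measurable.map_prodMk_left (α := Fin t → ℝ) (ν := ν k))
    convert this using 2 with h
    exact (Measure.map_map measurable_snoc measurable_prodMk_left).symm
  exact joint.comp (hp.prodMk measurable_id)

section CompensatedSum

variable {K : ℕ} (μ : Fin K → ℝ) (v : ℝ) (a : ℕ → (ℕ → ℝ) → Fin K) (c : ℕ → (ℕ → ℝ) → ℝ)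

/-- The logarithm of the exponential supermartingale attached to the weights `c`: the weighted
deviations of the observations from their means, minus the sub-Gaussian bound (with variance
proxy `v`) on their cumulant generating functions. -/
noncomputable def compensatedSum (n : ℕ) (y : ℕ → ℝ) : ℝ :=
  ∑ t ∈ range n, (c t y * (y t - μ (a t y)) - v * c t y ^ 2 / 2)

variable {a c}

lemma PastMeasurable.compensatedSum (ha : ∀ t, PastMeasurable t (a t))
    (hc : ∀ t, PastMeasurable t (c t)) (n : ℕ) :
    PastMeasurable n (compensatedSum μ v a c n) := by
  refine .sum fun t ht ↦ ?_
  have ht := mem_range.1 ht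
  have triple := ((hc t).mono ht.le).prodMk ((eval ht).prodMk ((ha t).mono ht.le))
  have hμ : Measurable μ := measurable_of_finite μ
  exact triple.comp (g := fun p ↦ p.1 * (p.2.1 - μ p.2.2) - v * p.1 ^ 2 / 2) (by fun_prop)

lemma compensatedSum_snoc (ha : ∀ t, PastMeasurable t (a t)) (hc : ∀ t, PastMeasurable t (c t))
    {n : ℕ} (h : Fin n → ℝ) (x : ℝ) :
    compensatedSum μ v a c (n + 1) (extendByZero (Fin.snoc h x : Fin (n + 1) → ℝ)) =
      compensatedSum μ v a c n (extendByZero h) +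
        -(v * c n (extendByZero h) ^ 2 / 2) +
        c n (extendByZero h) * (x - μ (a n (extendByZero h))) := by
  have past := (PastMeasurable.compensatedSum μ v ha hc n).apply_extendByZero_snoc le_rfl h x
  rw [compensatedSum, sum_range_succ, ← compensatedSum, past, extendByZero_snoc_self,
    (ha n).apply_extendByZero_snoc le_rfl, (hc n).apply_extendByZero_snoc le_rfl]
  ring

variable {μ v} {ν : Fin K → Measure ℝ} [∀ k, SFinite (ν k)]

lemma lintegral_exp_compensatedSum_le_one (hν : ∀ k, IsSubGaussianArm v (μ k) (ν k))
    (ha : ∀ t, PastMeasurable t (a t)) (hc : ∀ t, PastMeasurable t (c t)) (n : ℕ) :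
    ∫⁻ h, ENNReal.ofReal (Real.exp (compensatedSum μ v a c n (extendByZero h)))
      ∂histMeasure ν (streamStrategy a) n ≤ 1 := by
  induction n with
  | zero => simp [histMeasure, compensatedSum]
  | succ n ih =>
    have meas_exp : Measurable fun h : Fin (n + 1) → ℝ ↦
        ENNReal.ofReal (Real.exp (compensatedSum μ v a c (n + 1) (extendByZero h))) :=
      (((PastMeasurable.compensatedSum μ v ha hc (n + 1)).measurable.comp
        measurable_extendByZero).exp).ennreal_ofReal
    have meas_rule : Measurable (streamStrategy a n) :=
      (ha n).measurable.comp measurable_extendByZero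
    rw [histMeasure, Measure.lintegral_bind (measurable_map_snoc ν meas_rule).aemeasurable
      meas_exp.aemeasurable]
    refine (lintegral_mono fun h ↦ ?_).trans ih
    have meas_snoc : Measurable (Fin.snoc (α := fun _ ↦ ℝ) h) :=
      measurable_snoc.comp measurable_prodMk_left
    rw [lintegral_map meas_exp meas_snoc]
    set C := c n (extendByZero h)
    calc ∫⁻ x, ENNReal.ofReal (Real.exp (compensatedSum μ v a c (n + 1)
            (extendByZero (Fin.snoc h x : Fin (n + 1) → ℝ)))) ∂ν (streamStrategy a n h)
        = ENNReal.ofReal (Real.exp (compensatedSum μ v a c n (extendByZero h))) *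
            ENNReal.ofReal (Real.exp (-(v * C ^ 2 / 2))) *
            ∫⁻ x, ENNReal.ofReal (Real.exp (C * (x - μ (streamStrategy a n h))))
              ∂ν (streamStrategy a n h) := by
          rw [← lintegral_const_mul _ (by fun_prop)]
          simp_rw [compensatedSum_snoc μ v ha hc, Real.exp_add,
            ENNReal.ofReal_mul (mul_pos (Real.exp_pos _) (Real.exp_pos _)).le,
            ENNReal.ofReal_mul (Real.exp_pos _).le]
          rfl
      _ ≤ ENNReal.ofReal (Real.exp (compensatedSum μ v a c n (extendByZero h))) *
            ENNReal.ofReal (Real.exp (-(v * C ^ 2 / 2))) *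
            ENNReal.ofReal (Real.exp (v * C ^ 2 / 2)) := by gcongr; exact hν _ C
      _ = ENNReal.ofReal (Real.exp (compensatedSum μ v a c n (extendByZero h))) := by
          rw [mul_assoc, ← ENNReal.ofReal_mul (Real.exp_pos _).le, ← Real.exp_add]
          simp

lemma measure_le_compensatedSum_le (hν : ∀ k, IsSubGaussianArm v (μ k) (ν k))
    (ha : ∀ t, PastMeasurable t (a t)) (hc : ∀ t, PastMeasurable t (c t)) (n : ℕ) (M : ℝ) :
    histMeasure ν (streamStrategy a) n {h | M ≤ compensatedSum μ v a c n (extendByZero h)} ≤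
      ENNReal.ofReal (Real.exp (-M)) := by
  have meas : Measurable fun h : Fin n → ℝ ↦
      ENNReal.ofReal (Real.exp (compensatedSum μ v a c n (extendByZero h))) :=
    (((PastMeasurable.compensatedSum μ v ha hc n).measurable.comp
      measurable_extendByZero).exp).ennreal_ofReal
  calc histMeasure ν (streamStrategy a) n {h | M ≤ compensatedSum μ v a c n (extendByZero h)}
      ≤ histMeasure ν (streamStrategy a) n {h | ENNReal.ofReal (Real.exp M) ≤
          ENNReal.ofReal (Real.exp (compensatedSum μ v a c n (extendByZero h)))} :=
        measure_mono fun h hh ↦ ENNReal.ofReal_le_ofReal (Real.exp_le_exp.2 hh)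
    _ ≤ 1 / ENNReal.ofReal (Real.exp M) :=
        (meas_ge_le_lintegral_div meas.aemeasurable (by simp [Real.exp_pos])
          ENNReal.ofReal_ne_top).trans <| by
            gcongr; exact lintegral_exp_compensatedSum_le_one hν ha hc n
    _ = ENNReal.ofReal (Real.exp (-M)) := by
        rw [Real.exp_neg, ENNReal.ofReal_inv_of_pos (Real.exp_pos M), one_div]

end CompensatedSum

/-! ### Batches and rounds of batches -/

lemma sum_range_mul (f : ℕ → ℝ) (L N : ℕ) :
    ∑ t ∈ range (L * N), f t = ∑ r ∈ range N, ∑ i : Fin L, f (L * r + i) := by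
  induction N with
  | zero => simp
  | succ N ih =>
    rw [Nat.mul_succ, sum_range_add, ih, sum_range_succ, sum_range fun i ↦ f (L * N + i)]

/-- The mean of the `q`-th batch of `n` consecutive observations. -/
noncomputable def batchMean (n : ℕ) (y : ℕ → ℝ) (q : ℕ) : ℝ := (∑ p : Fin n, y (n * q + p)) / n

/-- Turns a sampling rule for batches into a sampling rule for single observations. -/
noncomputable def batched {α : Type*} (n : ℕ) (A : ℕ → (ℕ → ℝ) → α) (t : ℕ) (y : ℕ → ℝ) : α :=
  A (t / n) (batchMean n y)

lemma PastMeasurable.comp_batchMean {α : Type*} [MeasurableSpace α] {f : (ℕ → ℝ) → α}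
    {n q t : ℕ} (hf : PastMeasurable q f) (ht : n * q ≤ t) :
    PastMeasurable t fun y ↦ f (batchMean n y) := by
  refine hf.comp_stream (fun i hi ↦ ?_) ?_
  · refine PastMeasurable.comp (measurable_id'.div_const (n : ℝ))
      (.sum fun p _ ↦ PastMeasurable.eval ?_)
    calc n * i + p < n * i + n := by omega
      _ = n * (i + 1) := by ring
      _ ≤ t := (Nat.mul_le_mul_left n hi).trans ht
  · unfold batchMean; fun_prop

lemma PastMeasurable.batched {α : Type*} [MeasurableSpace α] {A : ℕ → (ℕ → ℝ) → α}
    (hA : ∀ q, PastMeasurable q (A q)) (n t : ℕ) : PastMeasurable t (batched n A t) :=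
  (hA (t / n)).comp_batchMean (Nat.mul_div_le t n)

section Batch

variable {K : ℕ} {μ : Fin K → ℝ} {v : ℝ} {A : ℕ → (ℕ → ℝ) → Fin K} {b : ℕ → (ℕ → ℝ) → ℝ}

lemma compensatedSum_batched {n : ℕ} (hn : 0 < n) {Q T : ℕ} (hT : n * Q ≤ T) (y : ℕ → ℝ) :
    compensatedSum μ v (batched n A)
        (fun t y ↦ if t < n * Q then batched n b t y / n else 0) T y =
      compensatedSum μ (v / n) A b Q (batchMean n y) := by
  rw [compensatedSum, ← sum_subset (range_subset_range.2 hT), sum_range_mul, compensatedSum]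
  · refine sum_congr rfl fun q hq ↦ ?_
    have lt (p : Fin n) : n * q + p < n * Q :=
      calc n * q + p < n * (q + 1) := by rw [mul_add_one]; omega
        _ ≤ n * Q := Nat.mul_le_mul_left n (mem_range.1 hq)
    have div (p : Fin n) : (n * q + p) / n = q := by
      rw [Nat.mul_add_div hn, Nat.div_eq_of_lt p.2, add_zero]
    have : (n : ℝ) ≠ 0 := by positivity
    simp only [lt, if_true, batched, div, sum_sub_distrib, ← mul_sum, sum_const, card_univ,
      Fintype.card_fin, nsmul_eq_mul, batchMean]
    field_simp
  · intro t _ ht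
    simp [mem_range.not.1 ht]

lemma measure_le_compensatedSum_batchMean_le {ν : Fin K → Measure ℝ} [∀ k, SFinite (ν k)]
    (hν : ∀ k, IsSubGaussianArm v (μ k) (ν k)) (hA : ∀ q, PastMeasurable q (A q))
    (hb : ∀ q, PastMeasurable q (b q)) {n Q T : ℕ} (hn : 0 < n) (hT : n * Q ≤ T) (M : ℝ) :
    histMeasure ν (streamStrategy (batched n A)) T
        {h | M ≤ compensatedSum μ (v / n) A b Q (batchMean n (extendByZero h))} ≤
      ENNReal.ofReal (Real.exp (-M)) := by
  simp_rw [← compensatedSum_batched hn hT]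
  refine measure_le_compensatedSum_le hν (PastMeasurable.batched hA n) (fun t ↦ ?_) T M
  by_cases ht : t < n * Q
  · simpa only [ht, if_true] using (PastMeasurable.batched hb n t).comp (measurable_id'.div_const _)
  · simpa only [ht, if_false] using PastMeasurable.const t (0 : ℝ)

end Batch

section Rounds

variable {K L : ℕ} {ι : Type*} {μ : Fin K → ℝ} {v w : ℝ} {A : ℕ → (ℕ → ℝ) → Fin K}

/-- The deviation, in the direction `u`, of the observations of round `r` from their means. A round
consists of `L` observations, and the rounds start after the first `o` observations. -/
def roundDeviation (μ : Fin K → ℝ) (A : ℕ → (ℕ → ℝ) → Fin K) (o r : ℕ) (u : Fin L → ℝ)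
    (y : ℕ → ℝ) : ℝ :=
  ∑ i : Fin L, u i * (y (o + L * r + i) - μ (A (o + L * r + i) y))

/-- Round `r` is bad when its observations deviate by at least `Δ` in one of the critical
directions `D r e`, which may depend on the past of the round. -/
def IsBadRound (μ : Fin K → ℝ) (A : ℕ → (ℕ → ℝ) → Fin K) (o : ℕ)
    (D : ℕ → ι → (ℕ → ℝ) → Fin L → ℝ) (Δ : ℝ) (y : ℕ → ℝ) (r : ℕ) : Prop :=
  ∃ e, Δ ≤ roundDeviation μ A o r (D r e y) y

/-- The weights of the observations that follow, in round `r`, the critical direction chosen by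
`ε r`, scaled by `l`. -/
def directionWeights [NeZero L] (o : ℕ) (D : ℕ → ι → (ℕ → ℝ) → Fin L → ℝ) (l : ℝ)
    (ε : ℕ → Option ι) (q : ℕ) (y : ℕ → ℝ) : ℝ :=
  if q < o then 0
  else (ε ((q - o) / L)).elim 0 fun e ↦ l * D ((q - o) / L) e y (Fin.ofNat L (q - o))

lemma PastMeasurable.directionWeights [NeZero L] {o : ℕ} {D : ℕ → ι → (ℕ → ℝ) → Fin L → ℝ}
    (hD : ∀ r e, PastMeasurable (o + L * r) (D r e)) (l : ℝ) (ε : ℕ → Option ι) (q : ℕ) :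
    PastMeasurable q (directionWeights o D l ε q) := by
  unfold ConcaveBandit.directionWeights
  by_cases hq : q < o
  · simpa only [hq, if_true] using PastMeasurable.const q (0 : ℝ)
  cases hε : ε ((q - o) / L) with
  | none => simpa only [hq, if_false, hε, Option.elim_none] using PastMeasurable.const q (0 : ℝ)
  | some e =>
    have past : o + L * ((q - o) / L) ≤ q := by
      have := Nat.mul_div_le (q - o) L
      omega
    simpa only [hq, if_false, hε, Option.elim_some] using ((hD _ e).mono past).comp
      (g := fun u ↦ l * u (Fin.ofNat L (q - o))) (by fun_prop)

lemma compensatedSum_directionWeights [NeZero L] (o : ℕ) (D : ℕ → ι → (ℕ → ℝ) → Fin L → ℝ)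
    (l : ℝ) (ε : ℕ → Option ι) (N : ℕ) (y : ℕ → ℝ) :
    compensatedSum μ w A (directionWeights o D l ε) (o + L * N) y =
      ∑ r ∈ range N, (ε r).elim 0 fun e ↦
        l * roundDeviation μ A o r (D r e y) y - w * l ^ 2 / 2 * ∑ i, D r e y i ^ 2 := by
  rw [compensatedSum, sum_range_add, sum_range_mul, sum_eq_zero, zero_add]
  · refine sum_congr rfl fun r _ ↦ ?_
    have div (i : Fin L) : (L * r + i) / L = r := by
      rw [Nat.mul_add_div (NeZero.pos L), Nat.div_eq_of_lt i.2, add_zero]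
    have mod (i : Fin L) : Fin.ofNat L (L * r + i) = i := by
      ext; simp [Nat.mod_eq_of_lt i.2]
    have late (i : Fin L) : ¬ o + (L * r + i) < o := by omega
    cases hε : ε r with
    | none => simp [directionWeights, div, hε]
    | some e =>
      simp only [directionWeights, late, if_false, Nat.add_sub_cancel_left, div, hε, mod,
        Option.elim_some, roundDeviation, mul_sum, ← sum_sub_distrib, add_assoc]
      exact sum_congr rfl fun i _ ↦ by ring
  · intro q hq
    simp [directionWeights, mem_range.1 hq]

open Classical in
lemma exists_le_compensatedSum_directionWeights [NeZero L] {o N m : ℕ}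
    {D : ℕ → ι → (ℕ → ℝ) → Fin L → ℝ} {Δ V : ℝ} (hΔ : 0 ≤ Δ) (hV : 0 < V) (hw : 0 < w)
    (hD : ∀ r e y, ∑ i, D r e y i ^ 2 ≤ V) {y : ℕ → ℝ}
    (hm : m ≤ #{r ∈ range N | IsBadRound μ A o D Δ y r}) :
    ∃ ε : ℕ → Option ι, (∀ r, N ≤ r → ε r = none) ∧ m * (Δ ^ 2 / (2 * V * w)) ≤
      compensatedSum μ w A (directionWeights o D (Δ / (V * w)) ε) (o + L * N) y := by
  let ε (r : ℕ) : Option ι :=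
    if h : r < N ∧ IsBadRound μ A o D Δ y r then some h.2.choose else none
  refine ⟨ε, fun r hr ↦ dif_neg fun h ↦ by omega, ?_⟩
  -- The scale `l = Δ / (V w)` maximizes the gain `l Δ - w l² V / 2` of a bad round.
  have gain (r : ℕ) (hr : r ∈ range N) :
      (if IsBadRound μ A o D Δ y r then Δ ^ 2 / (2 * V * w) else 0) ≤
        (ε r).elim 0 fun e ↦ Δ / (V * w) * roundDeviation μ A o r (D r e y) y -
          w * (Δ / (V * w)) ^ 2 / 2 * ∑ i, D r e y i ^ 2 := by
    by_cases h : IsBadRound μ A o D Δ y r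
    · simp only [ε, h, mem_range.1 hr, and_self, dif_pos, if_true, Option.elim_some]
      calc Δ ^ 2 / (2 * V * w) = Δ / (V * w) * Δ - w * (Δ / (V * w)) ^ 2 / 2 * V := by
            field_simp; norm_num
        _ ≤ _ := by
            gcongr
            exacts [h.choose_spec, hD _ _ _]
    · simp [ε, h]
  calc m * (Δ ^ 2 / (2 * V * w))
      ≤ #{r ∈ range N | IsBadRound μ A o D Δ y r} * (Δ ^ 2 / (2 * V * w)) := by gcongr
    _ = ∑ r ∈ range N, if IsBadRound μ A o D Δ y r then Δ ^ 2 / (2 * V * w) else 0 := by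
        rw [← sum_filter, sum_const, nsmul_eq_mul]
    _ ≤ _ := (sum_le_sum gain).trans_eq (compensatedSum_directionWeights ..).symm

open Classical in
lemma measure_many_badRounds_le [NeZero L] [Fintype ι] {ν : Fin K → Measure ℝ}
    [∀ k, SFinite (ν k)] (hν : ∀ k, IsSubGaussianArm v (μ k) (ν k)) (hv : 0 < v)
    (hA : ∀ q, PastMeasurable q (A q)) {o N : ℕ} {D : ℕ → ι → (ℕ → ℝ) → Fin L → ℝ}
    (hD : ∀ r e, PastMeasurable (o + L * r) (D r e)) {V : ℝ} (hV : 0 < V)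
    (hDV : ∀ r e y, ∑ i, D r e y i ^ 2 ≤ V) {Δ : ℝ} (hΔ : 0 ≤ Δ) {n T : ℕ} (hn : 0 < n)
    (hT : n * (o + L * N) ≤ T) (m : ℕ) :
    histMeasure ν (streamStrategy (batched n A)) T
        {h | m ≤ #{r ∈ range N | IsBadRound μ A o D Δ (batchMean n (extendByZero h)) r}} ≤
      ENNReal.ofReal ((Fintype.card ι + 1) ^ N *
        Real.exp (-(m * (Δ ^ 2 / (2 * V * (v / n)))))) := by
  set P := histMeasure ν (streamStrategy (batched n A)) T
  set M := m * (Δ ^ 2 / (2 * V * (v / n)))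
  let extend (ε : Fin N → Option ι) (r : ℕ) : Option ι := if h : r < N then ε ⟨r, h⟩ else none
  let heavy (ε : Fin N → Option ι) : Set (Fin T → ℝ) := {h | M ≤ compensatedSum μ (v / n) A
    (directionWeights o D (Δ / (V * (v / n))) (extend ε)) (o + L * N)
    (batchMean n (extendByZero h))}
  calc P {h | m ≤ #{r ∈ range N | IsBadRound μ A o D Δ (batchMean n (extendByZero h)) r}}
      ≤ P (⋃ ε, heavy ε) := by
        refine measure_mono fun h hh ↦ ?_
        obtain ⟨ε, hε, le⟩ :=
          exists_le_compensatedSum_directionWeights (w := v / n) hΔ hV (by positivity) hDV hh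
        refine Set.mem_iUnion.2 ⟨fun r ↦ ε r, ?_⟩
        have : extend (fun r ↦ ε r) = ε := by
          funext r
          by_cases h : r < N
          · simp [extend, h]
          · simp [extend, h, hε r (not_lt.1 h)]
        simpa only [heavy, this, Set.mem_ofPred_eq] using le
    _ ≤ ∑ ε, P (heavy ε) := measure_iUnion_fintype_le P heavy
    _ ≤ ∑ _ : Fin N → Option ι, ENNReal.ofReal (Real.exp (-M)) := sum_le_sum fun ε _ ↦
        measure_le_compensatedSum_batchMean_le hν hA (PastMeasurable.directionWeights hD _ _) hn
          hT M
    _ = ENNReal.ofReal ((Fintype.card ι + 1) ^ N * Real.exp (-M)) := by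
        rw [sum_const, card_univ, Fintype.card_fun, Fintype.card_option, Fintype.card_fin,
          ← ENNReal.ofReal_nsmul, nsmul_eq_mul]
        push_cast
        rfl

end Rounds

/-! ### Noisy binary search by multiplicative weights -/

lemma exists_weighted_median {ι α : Type*} [Fintype ι] [Nonempty ι] [LinearOrder α] (f : ι → α)
    {w : ι → ℝ} (hw : 0 ≤ ∑ i, w i) :
    ∃ i, (∑ j, w j) / 2 ≤ ∑ j with f j ≤ f i, w j ∧ (∑ j, w j) / 2 ≤ ∑ j with f i ≤ f j, w j := by
  classical
  set W := ∑ j, w j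
  have heavy_nonempty : ({i | W / 2 ≤ ∑ j with f j ≤ f i, w j} : Finset ι).Nonempty := by
    obtain ⟨i, hi⟩ := Finite.exists_max f
    refine ⟨i, mem_filter.2 ⟨mem_univ i, ?_⟩⟩
    rw [filter_true_of_mem fun j _ ↦ hi j]
    exact half_le_self hw
  obtain ⟨i, hi, hmin⟩ := exists_min_image _ f heavy_nonempty
  refine ⟨i, (mem_filter.1 hi).2, ?_⟩
  have below_le : ∑ j with ¬ f i ≤ f j, w j ≤ W / 2 := by
    rcases ({j | ¬ f i ≤ f j} : Finset ι).eq_empty_or_nonempty with empty | nonempty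
    · rw [empty, sum_empty]
      positivity
    · obtain ⟨b, hb, hmax⟩ := exists_max_image _ f nonempty
      have hb : f b < f i := not_le.1 (mem_filter.1 hb).2
      have below_iff (j : ι) (_ : j ∈ univ) : ¬ f i ≤ f j ↔ f j ≤ f b :=
        ⟨fun hj ↦ hmax j (mem_filter.2 ⟨mem_univ j, hj⟩), fun hj ↦ (hj.trans_lt hb).not_ge⟩
      rw [filter_congr below_iff]
      by_contra! heavy
      exact hb.not_ge (hmin b (mem_filter.2 ⟨mem_univ b, heavy.le⟩))
  have split := sum_filter_add_sum_filter_not univ (fun j ↦ f i ≤ f j) w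
  linarith

/-- The state of the search: for every arm, the number of answers that contradict it being the
target and the number of answers that confirm it. -/
structure SearchState (K : ℕ) where
  contradictions : Fin K → ℕ
  votes : Fin K → ℕ

instance {K : ℕ} : MeasurableSpace (SearchState K) := ⊤

instance {K : ℕ} : DiscreteMeasurableSpace (SearchState K) := ⟨fun _ ↦ trivial⟩

instance {K : ℕ} : Countable (SearchState K) :=
  Function.Injective.countable (f := fun S ↦ (S.contradictions, S.votes))
    fun S S' h ↦ by cases S; cases S'; simpa using h

/-- The answers to the query of an arm `x` and a radius `s`: the target is `x` itself, it lies to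
the right or to the left of `x`, or its distance to `x` is smaller or larger than `s`. -/
inductive Answer
  | here | right | left | near | far

instance : MeasurableSpace Answer := ⊤

instance : DiscreteMeasurableSpace Answer := ⟨fun _ ↦ trivial⟩

namespace SearchState

variable {K : ℕ}

/-- The weight of an arm in the search. -/
noncomputable def weight (S : SearchState K) (k : Fin K) : ℝ := (1 / 4) ^ S.contradictions k

lemma weight_pos (S : SearchState K) (k : Fin K) : 0 < S.weight k := by
  unfold weight; positivity

section Query

variable [NeZero K] (S : SearchState K)

lemma exists_query_median {α : Type*} [LinearOrder α] (f : Fin K → α) :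
    ∃ i, (∑ k, S.weight k) / 2 ≤ ∑ k with f k ≤ f i, S.weight k ∧
      (∑ k, S.weight k) / 2 ≤ ∑ k with f i ≤ f k, S.weight k :=
  exists_weighted_median f (sum_nonneg fun k _ ↦ (S.weight_pos k).le)

/-- The queried arm: a weighted median of the arms. -/
noncomputable def queryArm : Fin K := (S.exists_query_median id).choose

/-- The queried radius: a weighted median of the distances of the arms to the queried arm. -/
noncomputable def queryRadius : ℕ :=
  Nat.dist (S.exists_query_median fun k ↦ Nat.dist k S.queryArm).choose S.queryArm

/-- The arms that cannot be the target if the answer is correct. -/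
def refuted : Answer → Set (Fin K)
  | .here => ∅
  | .right => {k | k ≤ S.queryArm}
  | .left => {k | S.queryArm ≤ k}
  | .near => {k | S.queryRadius ≤ Nat.dist k S.queryArm}
  | .far => {k | Nat.dist k S.queryArm ≤ S.queryRadius}

open Classical in
/-- The state after an answer. -/
noncomputable def update (a : Answer) : SearchState K where
  contradictions k := S.contradictions k + if k ∈ S.refuted a then 1 else 0
  votes k := S.votes k + if a = .here ∧ k = S.queryArm then 1 else 0

/-- An answer is misleading when it refutes the target or confirms another arm. The target is
encoded by the set `G` of its possible positions, which is a singleton, or empty when there is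
no target. -/
def Misleading (G : Set (Fin K)) (a : Answer) : Prop :=
  (∃ k ∈ G, k ∈ S.refuted a) ∨ (a = .here ∧ S.queryArm ∉ G)

/-- The potential of the search, which every answer decreases by a constant factor. -/
noncomputable def potential : ℝ := (∑ k, S.weight k) * (5 / 8) ^ ∑ k, S.votes k

open Classical in
/-- The number of contradictions of the target plus the number of votes for other arms. -/
noncomputable def errors (G : Set (Fin K)) : ℕ :=
  ∑ k, if k ∈ G then S.contradictions k else S.votes k

variable {S} {a : Answer}

open Classical in
lemma half_le_weight_refuted (ha : a ≠ .here) :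
    (∑ k, S.weight k) / 2 ≤ ∑ k with k ∈ S.refuted a, S.weight k := by
  have arm := (S.exists_query_median id).choose_spec
  have radius := (S.exists_query_median fun k ↦ Nat.dist k S.queryArm).choose_spec
  cases a with
  | here => exact absurd rfl ha
  | right => convert arm.1; rfl
  | left => convert arm.2; rfl
  | near => convert radius.2; rfl
  | far => convert radius.1; rfl

open Classical in
lemma weight_update (k : Fin K) :
    (S.update a).weight k = S.weight k - 3 / 4 * if k ∈ S.refuted a then S.weight k else 0 := by
  unfold weight
  by_cases hk : k ∈ S.refuted a
  · simp only [update, hk, if_true, pow_succ]; ring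
  · simp [update, hk]

lemma potential_update_le (a : Answer) : (S.update a).potential ≤ 5 / 8 * S.potential := by
  by_cases ha : a = .here
  · have votes : ∑ k, (S.update a).votes k = ∑ k, S.votes k + 1 := by
      simp [update, ha, sum_add_distrib]
    have weights : ∑ k, (S.update a).weight k = ∑ k, S.weight k := by
      simp [weight_update, ha, refuted]
    rw [potential, votes, weights, pow_succ, potential]
    exact (by ring : _ = _).le
  · have votes : ∑ k, (S.update a).votes k = ∑ k, S.votes k := by simp [update, ha]
    have weights : ∑ k, (S.update a).weight k ≤ 5 / 8 * ∑ k, S.weight k := by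
      classical
      simp_rw [weight_update, sum_sub_distrib, ← mul_sum, ← sum_filter]
      linarith [half_le_weight_refuted (S := S) ha]
    rw [potential, votes, potential, ← mul_assoc]
    gcongr

open Classical in
lemma errors_update_le {G : Set (Fin K)} (hG : G.Subsingleton) :
    (S.update a).errors G ≤ S.errors G + if S.Misleading G a then 1 else 0 := by
  have increments : (S.update a).errors G = S.errors G + ∑ k, if k ∈ G then
      (if k ∈ S.refuted a then 1 else 0) else if a = .here ∧ k = S.queryArm then 1 else 0 := by
    rw [errors, errors, ← sum_add_distrib]
    refine sum_congr rfl fun k _ ↦ ?_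
    by_cases hk : k ∈ G <;> simp [update, hk]
  rw [increments, add_le_add_iff_left]
  by_cases ha : a = .here
  · subst ha
    calc _ ≤ ∑ k, if k = S.queryArm then if k ∈ G then 0 else 1 else 0 :=
          sum_le_sum fun k _ ↦ by by_cases hk : k ∈ G <;> simp [hk, refuted]
      _ ≤ _ := by simp [Misleading, refuted]
  · have refuted_targets : #{k | k ∈ G ∧ k ∈ S.refuted a} ≤
        if S.Misleading G a then 1 else 0 := by
      split_ifs with h
      · simp only [card_le_one, mem_filter]
        exact fun i hi j hj ↦ hG hi.2.1 hj.2.1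
      · simp only [Misleading, not_or, not_exists, not_and] at h
        simpa [card_eq_zero, filter_eq_empty_iff] using h.1
    simpa [ha, ← ite_and, sum_boole] using refuted_targets

/-- The state of the search after `r` rounds, where `ans` answers the queries. -/
noncomputable def run (ans : ℕ → SearchState K → Answer) : ℕ → SearchState K
  | 0 => ⟨0, 0⟩
  | r + 1 => (run ans r).update (ans r (run ans r))

variable {ans : ℕ → SearchState K → Answer}

lemma potential_run_le (ans : ℕ → SearchState K → Answer) (r : ℕ) :
    (run ans r).potential ≤ (5 / 8) ^ r * K := by
  induction r with
  | zero => simp [run, potential, weight]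
  | succ r ih =>
    calc (run ans (r + 1)).potential
        ≤ 5 / 8 * (run ans r).potential := potential_update_le _
      _ ≤ 5 / 8 * ((5 / 8) ^ r * K) := by gcongr
      _ = (5 / 8) ^ (r + 1) * K := by ring

open Classical in
lemma errors_run_le {G : Set (Fin K)} (hG : G.Subsingleton) (N : ℕ) :
    (run ans N).errors G ≤
      #{r ∈ range N | (run ans r).Misleading G (ans r (run ans r))} := by
  induction N with
  | zero => simp [run, errors]
  | succ N ih =>
    rw [range_add_one, filter_insert]
    refine (errors_update_le hG).trans ?_
    split_ifs with h
    · rw [card_insert_of_notMem (by simp)]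
      omega
    · exact ih

end Query

lemma le_of_potential_le {m a b v : ℕ} (hK : K < 2 ^ (m + 1)) (hab : a + b < m)
    (h : (1 / 4 : ℝ) ^ a * (5 / 8) ^ (b + v) ≤ (5 / 8) ^ (6 * m) * K) : m ≤ v := by
  by_contra! hv
  obtain ⟨q, rfl⟩ : ∃ q, m = q + 1 := ⟨m - 1, by omega⟩
  have hK : (K : ℝ) ≤ 2 ^ (q + 2) := by exact_mod_cast hK.le
  refine absurd h (not_le.2 ?_)
  calc (5 / 8 : ℝ) ^ (6 * (q + 1)) * K
      ≤ (5 / 8) ^ (6 * (q + 1)) * 2 ^ (q + 2) := by gcongr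
    _ = (2 * (5 / 8) ^ 6) ^ q * (4 * (5 / 8) ^ 6) := by rw [mul_pow, pow_mul]; ring
    _ < (2 * (5 / 8) ^ 6) ^ q * 1 := mul_lt_mul_of_pos_left (by norm_num) (by positivity)
    _ ≤ (1 / 4 * (5 / 8)) ^ q * 1 := by gcongr ?_ ^ q * 1; norm_num
    _ = (1 / 4) ^ q * (5 / 8) ^ q := by rw [mul_one, mul_pow]
    _ ≤ (1 / 4) ^ (a + b) * (5 / 8) ^ v := by
        gcongr ?_ * ?_
        · exact pow_le_pow_of_le_one (by norm_num) (by norm_num) (by omega)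
        · exact pow_le_pow_of_le_one (by norm_num) (by norm_num) (by omega)
    _ = (1 / 4) ^ a * ((1 / 4) ^ b * (5 / 8) ^ v) := by ring
    _ ≤ (1 / 4) ^ a * ((5 / 8) ^ b * (5 / 8) ^ v) := by gcongr _ * (?_ ^ b * _); norm_num
    _ = (1 / 4) ^ a * (5 / 8) ^ (b + v) := by rw [pow_add]

variable [NeZero K] {ans : ℕ → SearchState K → Answer}

open Classical in
lemma le_votes_run_iff {G : Set (Fin K)} (hG : G.Subsingleton) {m : ℕ} (hK : K < 2 ^ (m + 1))
    (few_misleading :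
      #{r ∈ range (6 * m) | (run ans r).Misleading G (ans r (run ans r))} < m) (k : Fin K) :
    m ≤ (run ans (6 * m)).votes k ↔ k ∈ G := by
  have few_errors := (errors_run_le hG (6 * m)).trans_lt few_misleading
  have small_potential := potential_run_le ans (6 * m)
  set S := run ans (6 * m)
  constructor
  · contrapose!
    intro hk
    calc S.votes k = if k ∈ G then S.contradictions k else S.votes k := by rw [if_neg hk]
      _ ≤ S.errors G := single_le_sum
          (f := fun k ↦ if k ∈ G then S.contradictions k else S.votes k)
          (fun _ _ ↦ Nat.zero_le _) (mem_univ k)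
      _ < m := few_errors
  · intro hk
    have errors_eq : S.errors G = S.contradictions k + ∑ j ∈ univ.erase k, S.votes j := by
      rw [errors, ← add_sum_erase _ _ (mem_univ k), if_pos hk]
      congr 1
      exact sum_congr rfl fun j hj ↦ if_neg fun hjG ↦ ne_of_mem_erase hj (hG hjG hk)
    refine le_of_potential_le hK (errors_eq ▸ few_errors) (small_potential.trans' ?_)
    rw [potential, sum_erase_add _ _ (mem_univ k)]
    gcongr
    exact single_le_sum (f := S.weight) (fun j _ ↦ (S.weight_pos j).le) (mem_univ k)

end SearchState

/-! ### Searching the last arm above the threshold -/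

/-- The set of last arms above the threshold, which has at most one element. -/
def lastAbove {K : ℕ} (τ : ℝ) (μ : Fin K → ℝ) : Set (Fin K) := {k | IsGreatest {i | τ ≤ μ i} k}

lemma subsingleton_lastAbove {K : ℕ} (τ : ℝ) (μ : Fin K → ℝ) : (lastAbove τ μ).Subsingleton :=
  fun _ hi _ hj ↦ hi.unique hj

/-- The arm `v`, or the default `x` when `v` is out of range. -/
def armOr {K : ℕ} (x : Fin K) (v : ℕ) : Fin K := if h : v < K then ⟨v, h⟩ else x

lemma armOr_of_lt {K : ℕ} (x : Fin K) {v : ℕ} (h : v < K) : armOr x v = ⟨v, h⟩ := dif_pos h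

section Round

variable {K : ℕ} [NeZero K] (τ : ℝ) (S : SearchState K) (z : Fin 4 → ℝ)

/-- The first test of a round: the mean of the observations of the queried arm reaches `τ`. -/
def LooksAbove : Prop := τ ≤ (z 0 + z 1) / 2

open Classical in
/-- The arms played in a round: twice the queried arm `x`, then twice its right neighbour if `x`
looks above the threshold, and otherwise the arms at the queried radius to the left and to the
right of `x`. -/
noncomputable def roundArms : Fin 4 → Fin K :=
  let x := S.queryArm
  let s := S.queryRadius
  ![x, x, if LooksAbove τ z then armOr x (x + 1) else armOr x (x - s),
    if LooksAbove τ z then armOr x (x + 1) else armOr x (x + s)]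

/-- The linear extrapolation, from the arms at distance `s` to the left and at the queried arm `x`,
to distance `s` to the right reaches the threshold. By concavity this is necessary for an arm
above the threshold to lie to the right of `x` within distance `s` when `x` is below it. -/
def ReachesRight : Prop := (S.queryArm : ℕ) < S.queryRadius ∨ τ ≤ z 0 + z 1 - z 2

/-- The mirror image of `ReachesRight`. -/
def ReachesLeft : Prop := K ≤ S.queryArm + S.queryRadius ∨ τ ≤ z 0 + z 1 - z 3

open Classical in
/-- The answer to the query of a state, given the observations `z` of the round. -/
noncomputable def answer : Answer :=
  if LooksAbove τ z then
    if (S.queryArm : ℕ) + 1 < K ∧ τ ≤ (z 2 + z 3) / 2 then .right else .here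
  else if ReachesRight τ S z then if ReachesLeft τ S z then .near else .right
  else if ReachesLeft τ S z then .left else .far

end Round

section Tests

open Classical in
/-- The sign of the noise that can spoil a test whose correct outcome is `P`. -/
noncomputable def adverseSign (P : Prop) : ℝ := if P then -1 else 1

variable {τ a b Δ : ℝ}

lemma le_of_adverseSign_mul_lt {P : Prop} (hP : P) (hb : τ + Δ ≤ b)
    (noise : adverseSign P * (a - b) < Δ) : τ ≤ a := by
  rw [adverseSign, if_pos hP] at noise
  linarith

lemma lt_of_adverseSign_mul_lt {P : Prop} (hP : ¬ P) (hb : b ≤ τ - Δ)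
    (noise : adverseSign P * (a - b) < Δ) : a < τ := by
  rw [adverseSign, if_neg hP] at noise
  linarith

lemma add_le_of_le_of_le_abs_sub (hb : τ ≤ b) (gap : Δ ≤ |b - τ|) : τ + Δ ≤ b := by
  rw [abs_of_nonneg (sub_nonneg.2 hb)] at gap
  linarith

lemma le_sub_of_lt_of_le_abs_sub (hb : b < τ) (gap : Δ ≤ |b - τ|) : b ≤ τ - Δ := by
  rw [abs_of_neg (sub_neg.2 hb)] at gap
  linarith

lemma le_iff_le_of_adverseSign_mul_lt (gap : Δ ≤ |b - τ|)
    (noise : adverseSign (τ ≤ b) * (a - b) < Δ) : τ ≤ a ↔ τ ≤ b := by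
  constructor
  · contrapose!
    exact fun hb ↦
      lt_of_adverseSign_mul_lt (not_le.2 hb) (le_sub_of_lt_of_le_abs_sub hb gap) noise
  · exact fun hb ↦ le_of_adverseSign_mul_lt hb (add_le_of_le_of_le_abs_sub hb gap) noise

end Tests

section Critical

variable {K : ℕ}

open Classical in
/-- The directions of the noise that can spoil the tests of a round whose queried arm is `x`. -/
noncomputable def critical (τ : ℝ) (μ : Fin K → ℝ) (x : Fin K) : Fin 3 → Fin 4 → ℝ :=
  if τ ≤ μ x then
    ![adverseSign (τ ≤ μ x) • ![1 / 2, 1 / 2, 0, 0],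
      adverseSign (τ ≤ μ (armOr x (x + 1))) • ![0, 0, 1 / 2, 1 / 2],
      0]
  else
    ![adverseSign (τ ≤ μ x) • ![1 / 2, 1 / 2, 0, 0],
      adverseSign (∃ k > x, τ ≤ μ k) • ![1, 1, -1, 0],
      adverseSign (∃ k < x, τ ≤ μ k) • ![1, 1, 0, -1]]

lemma sum_critical_sq_le (τ : ℝ) (μ : Fin K → ℝ) (x : Fin K) (e : Fin 3) :
    ∑ i, critical τ μ x e i ^ 2 ≤ 3 := by
  have sign_sq (P : Prop) : adverseSign P ^ 2 = 1 := by unfold adverseSign; split_ifs <;> norm_num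
  unfold critical
  split_ifs <;> fin_cases e <;>
    simp only [Fin.sum_univ_four, Pi.smul_apply, smul_eq_mul, mul_pow, sign_sq, Fin.zero_eta,
      Fin.mk_one, Fin.reduceFinMk, Matrix.cons_val, Pi.zero_apply] <;> norm_num

variable [NeZero K] {τ Δ : ℝ} {μ : Fin K → ℝ} {S : SearchState K} {z : Fin 4 → ℝ}

lemma looksAbove_iff (gap : Δ ≤ |μ S.queryArm - τ|)
    (noise : ∑ i, critical τ μ S.queryArm 0 i * (z i - μ (roundArms τ S z i)) < Δ) :
    LooksAbove τ z ↔ τ ≤ μ S.queryArm := by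
  refine le_iff_le_of_adverseSign_mul_lt gap (lt_of_eq_of_lt ?_ noise)
  by_cases hx : τ ≤ μ S.queryArm <;>
    simp only [critical, hx, if_true, if_false, roundArms, Fin.sum_univ_four, Pi.smul_apply,
      smul_eq_mul, Matrix.cons_val] <;>
    ring

lemma le_neighbour_mean_iff (gap : ∀ k, Δ ≤ |μ k - τ|) (hx : τ ≤ μ S.queryArm)
    (hz : LooksAbove τ z)
    (noise : ∑ i, critical τ μ S.queryArm 1 i * (z i - μ (roundArms τ S z i)) < Δ) :
    τ ≤ (z 2 + z 3) / 2 ↔ τ ≤ μ (armOr S.queryArm (S.queryArm + 1)) := by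
  refine le_iff_le_of_adverseSign_mul_lt (gap _) (lt_of_eq_of_lt ?_ noise)
  simp only [critical, hx, if_true, roundArms, hz, Fin.sum_univ_four, Pi.smul_apply, smul_eq_mul,
    Matrix.cons_val]
  ring

lemma adverseSign_exists_gt_mul_lt (hx : μ S.queryArm < τ) (hz : ¬ LooksAbove τ z)
    (noise : ∑ i, critical τ μ S.queryArm 1 i * (z i - μ (roundArms τ S z i)) < Δ) :
    adverseSign (∃ k > S.queryArm, τ ≤ μ k) * (z 0 + z 1 - z 2 -
      (2 * μ S.queryArm - μ (armOr S.queryArm (S.queryArm - S.queryRadius)))) < Δ := by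
  refine lt_of_eq_of_lt ?_ noise
  simp only [critical, hx.not_ge, if_false, roundArms, hz, Fin.sum_univ_four, Pi.smul_apply,
    smul_eq_mul, Matrix.cons_val]
  ring

lemma adverseSign_exists_lt_mul_lt (hx : μ S.queryArm < τ) (hz : ¬ LooksAbove τ z)
    (noise : ∑ i, critical τ μ S.queryArm 2 i * (z i - μ (roundArms τ S z i)) < Δ) :
    adverseSign (∃ k < S.queryArm, τ ≤ μ k) * (z 0 + z 1 - z 3 -
      (2 * μ S.queryArm - μ (armOr S.queryArm (S.queryArm + S.queryRadius)))) < Δ := by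
  refine lt_of_eq_of_lt ?_ noise
  simp only [critical, hx.not_ge, if_false, roundArms, hz, Fin.sum_univ_four, Pi.smul_apply,
    smul_eq_mul, Matrix.cons_val]
  ring

lemma reachesRight_of_lt_of_le (hμ : ConcaveSeq μ) (gap : ∀ k, Δ ≤ |μ k - τ|)
    (hx : μ S.queryArm < τ) (hz : ¬ LooksAbove τ z)
    (noise : ∑ i, critical τ μ S.queryArm 1 i * (z i - μ (roundArms τ S z i)) < Δ)
    {k : Fin K} (hk : τ ≤ μ k) (hxk : S.queryArm < k)
    (near : (k : ℕ) ≤ S.queryArm + S.queryRadius) : ReachesRight τ S z := by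
  refine or_iff_not_imp_left.2 fun hs ↦ ?_
  have arm := armOr_of_lt S.queryArm (v := S.queryArm - S.queryRadius) (by omega)
  have extrapolation := hμ.le_extrapolation
    (z := armOr S.queryArm (S.queryArm - S.queryRadius)) hxk
    (by rw [arm]; dsimp only; omega) (hx.le.trans hk)
  exact le_of_adverseSign_mul_lt ⟨k, hxk, hk⟩
    ((add_le_of_le_of_le_abs_sub hk (gap k)).trans extrapolation)
    (adverseSign_exists_gt_mul_lt hx hz noise)

lemma reachesLeft_of_lt_of_le (hμ : ConcaveSeq μ) (gap : ∀ k, Δ ≤ |μ k - τ|)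
    (hx : μ S.queryArm < τ) (hz : ¬ LooksAbove τ z)
    (noise : ∑ i, critical τ μ S.queryArm 2 i * (z i - μ (roundArms τ S z i)) < Δ)
    {k : Fin K} (hk : τ ≤ μ k) (hkx : k < S.queryArm)
    (near : (S.queryArm : ℕ) ≤ k + S.queryRadius) : ReachesLeft τ S z := by
  refine or_iff_not_imp_left.2 fun hs ↦ ?_
  have arm := armOr_of_lt S.queryArm (v := S.queryArm + S.queryRadius) (by omega)
  have extrapolation := hμ.le_extrapolation_left
    (z := armOr S.queryArm (S.queryArm + S.queryRadius)) hkx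
    (by rw [arm]; dsimp only; omega) (hx.le.trans hk)
  exact le_of_adverseSign_mul_lt ⟨k, hkx, hk⟩
    ((add_le_of_le_of_le_abs_sub hk (gap k)).trans extrapolation)
    (adverseSign_exists_lt_mul_lt hx hz noise)

lemma not_reachesRight_of_add_le (hμ : ConcaveSeq μ) (gap : Δ ≤ |μ S.queryArm - τ|)
    (hx : μ S.queryArm < τ) (hz : ¬ LooksAbove τ z)
    (noise : ∑ i, critical τ μ S.queryArm 1 i * (z i - μ (roundArms τ S z i)) < Δ)
    {k : Fin K} (hk : τ ≤ μ k) (far : (k : ℕ) + S.queryRadius ≤ S.queryArm) :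
    ¬ ReachesRight τ S z := by
  have none_right : ¬ ∃ j > S.queryArm, τ ≤ μ j := fun ⟨j, hxj, hj⟩ ↦
    have hkx : k ≤ S.queryArm := Fin.le_def.2 (by omega)
    hx.not_ge ((hμ.ordConnected_superlevel τ).out hk hj ⟨hkx, le_of_lt hxj⟩)
  have : μ S.queryArm ≤ μ (armOr S.queryArm (S.queryArm - S.queryRadius)) := by
    rw [armOr_of_lt _ (by omega)]
    exact (hμ.ordConnected_superlevel _).out (hx.le.trans hk)
      (le_refl (μ S.queryArm))
      ⟨Fin.le_def.2 (by dsimp only; omega), Fin.le_def.2 (by dsimp only; omega)⟩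
  have := le_sub_of_lt_of_le_abs_sub hx gap
  refine not_or.2 ⟨by omega, not_le.2 ?_⟩
  exact lt_of_adverseSign_mul_lt none_right (by linarith)
    (adverseSign_exists_gt_mul_lt hx hz noise)

lemma not_reachesLeft_of_add_le (hμ : ConcaveSeq μ) (gap : Δ ≤ |μ S.queryArm - τ|)
    (hx : μ S.queryArm < τ) (hz : ¬ LooksAbove τ z)
    (noise : ∑ i, critical τ μ S.queryArm 2 i * (z i - μ (roundArms τ S z i)) < Δ)
    {k : Fin K} (hk : τ ≤ μ k) (far : (S.queryArm : ℕ) + S.queryRadius ≤ k) :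
    ¬ ReachesLeft τ S z := by
  have none_left : ¬ ∃ j < S.queryArm, τ ≤ μ j := fun ⟨j, hjx, hj⟩ ↦
    have hxk : S.queryArm ≤ k := Fin.le_def.2 (by omega)
    hx.not_ge ((hμ.ordConnected_superlevel τ).out hj hk ⟨le_of_lt hjx, hxk⟩)
  have : μ S.queryArm ≤ μ (armOr S.queryArm (S.queryArm + S.queryRadius)) := by
    rw [armOr_of_lt _ (by omega)]
    exact (hμ.ordConnected_superlevel _).out (le_refl (μ S.queryArm))
      (hx.le.trans hk)
      ⟨Fin.le_def.2 (by dsimp only; omega), Fin.le_def.2 (by dsimp only; omega)⟩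
  have := le_sub_of_lt_of_le_abs_sub hx gap
  refine not_or.2 ⟨by omega, not_le.2 ?_⟩
  exact lt_of_adverseSign_mul_lt none_left (by linarith)
    (adverseSign_exists_lt_mul_lt hx hz noise)

lemma not_misleading_of_looksAbove (hμ : ConcaveSeq μ) (gap : ∀ k, Δ ≤ |μ k - τ|)
    (hz : LooksAbove τ z)
    (noise : ∀ e, ∑ i, critical τ μ S.queryArm e i * (z i - μ (roundArms τ S z i)) < Δ) :
    ¬ S.Misleading (lastAbove τ μ) (answer τ S z) := by
  have hx := (looksAbove_iff (gap _) (noise 0)).1 hz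
  have neighbour := le_neighbour_mean_iff gap hx hz (noise 1)
  by_cases right : (S.queryArm : ℕ) + 1 < K ∧ τ ≤ (z 2 + z 3) / 2
  · have hx' := neighbour.1 right.2
    rw [armOr_of_lt _ right.1] at hx'
    simp only [answer, hz, right, SearchState.Misleading, SearchState.refuted, if_true, and_self,
      reduceCtorEq, false_and, or_false, not_exists, not_and]
    exact fun k hk hkx ↦ by simpa [Fin.le_def] using (hk.2 hx').trans hkx
  · have last : S.queryArm ∈ lastAbove τ μ := by
      refine ⟨hx, fun k hk ↦ not_lt.1 fun hxk ↦ right ?_⟩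
      have hxK : (S.queryArm : ℕ) + 1 < K := by omega
      refine ⟨hxK, neighbour.2 ?_⟩
      rw [armOr_of_lt _ hxK]
      exact (hμ.ordConnected_superlevel τ).out hx hk
        ⟨Fin.le_def.2 (by simp), Fin.le_def.2 (by simpa using hxk)⟩
    simp [answer, hz, right, SearchState.Misleading, SearchState.refuted, last]

lemma not_misleading_of_not_looksAbove (hμ : ConcaveSeq μ) (gap : ∀ k, Δ ≤ |μ k - τ|)
    (hz : ¬ LooksAbove τ z)
    (noise : ∀ e, ∑ i, critical τ μ S.queryArm e i * (z i - μ (roundArms τ S z i)) < Δ) :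
    ¬ S.Misleading (lastAbove τ μ) (answer τ S z) := by
  have hx := not_le.1 (mt (looksAbove_iff (gap _) (noise 0)).2 hz)
  have not_here : answer τ S z ≠ .here := by
    unfold answer
    split_ifs <;> simp
  rintro (⟨k, hk, refuted⟩ | ⟨here, -⟩)
  swap
  · exact not_here here
  have hk := hk.1
  have ne : (k : ℕ) ≠ S.queryArm := fun h ↦ hx.not_ge (Fin.ext h ▸ hk)
  have right := reachesRight_of_lt_of_le hμ gap hx hz (noise 1) hk
  have left := reachesLeft_of_lt_of_le hμ gap hx hz (noise 2) hk
  have not_right := not_reachesRight_of_add_le hμ (gap _) hx hz (noise 1) hk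
  have not_left := not_reachesLeft_of_add_le hμ (gap _) hx hz (noise 2) hk
  rw [Fin.lt_def] at right left
  by_cases hR : ReachesRight τ S z <;> by_cases hL : ReachesLeft τ S z <;>
    simp only [answer, hz, hR, hL, SearchState.refuted, Nat.dist, Set.mem_ofPred_eq, Fin.le_def,
      if_true, if_false, not_true_eq_false, imp_false, not_le] at * <;> omega

lemma not_misleading (hμ : ConcaveSeq μ) (gap : ∀ k, Δ ≤ |μ k - τ|)
    (noise : ∀ e, ∑ i, critical τ μ S.queryArm e i * (z i - μ (roundArms τ S z i)) < Δ) :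
    ¬ S.Misleading (lastAbove τ μ) (answer τ S z) := by
  by_cases hz : LooksAbove τ z
  · exact not_misleading_of_looksAbove hμ gap hz noise
  · exact not_misleading_of_not_looksAbove hμ gap hz noise

end Critical

section Search

variable {K : ℕ} [NeZero K] (τ : ℝ) (o : ℕ)

/-- The observations of round `r` of a search that starts after the first `o` observations. -/
def block (y : ℕ → ℝ) (r : ℕ) (i : Fin 4) : ℝ := y (o + 4 * r + i)

/-- The state after `r` rounds of a search that starts after the first `o` observations. -/
noncomputable def searchState (r : ℕ) (y : ℕ → ℝ) : SearchState K :=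
  SearchState.run (fun r S ↦ answer τ S (block o y r)) r

/-- The arm played at time `q ≥ o` by a search that starts after the first `o` observations. -/
noncomputable def searchArm (q : ℕ) (y : ℕ → ℝ) : Fin K :=
  roundArms τ (searchState τ o ((q - o) / 4) y) (block o y ((q - o) / 4)) (Fin.ofNat 4 (q - o))

/-- The critical directions of round `r` of a search in a bandit problem with means `μ`. -/
noncomputable def searchDirection (μ : Fin K → ℝ) (r : ℕ) (e : Fin 3) (y : ℕ → ℝ) : Fin 4 → ℝ :=
  critical τ μ (searchState τ o r y).queryArm e

/-- The arms in `G` are those with at least `m` votes. -/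
def SearchState.Locates (S : SearchState K) (m : ℕ) (G : Set (Fin K)) : Prop :=
  ∀ k, m ≤ S.votes k ↔ k ∈ G

lemma measurableSet_le_of_measurable {f : (Fin 4 → ℝ) → ℝ} (hf : Measurable f) :
    MeasurableSet {z | τ ≤ f z} := measurableSet_le measurable_const hf

lemma measurableSet_looksAbove : MeasurableSet {z : Fin 4 → ℝ | LooksAbove τ z} :=
  measurableSet_le_of_measurable τ (f := fun z ↦ (z 0 + z 1) / 2) (by fun_prop)

lemma measurable_answer (S : SearchState K) : Measurable fun z ↦ answer τ S z := by
  have right : MeasurableSet {z : Fin 4 → ℝ | ReachesRight τ S z} :=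
    (MeasurableSet.const _).union
      (measurableSet_le_of_measurable τ (f := fun z ↦ z 0 + z 1 - z 2) (by fun_prop))
  have left : MeasurableSet {z : Fin 4 → ℝ | ReachesLeft τ S z} :=
    (MeasurableSet.const _).union
      (measurableSet_le_of_measurable τ (f := fun z ↦ z 0 + z 1 - z 3) (by fun_prop))
  have neighbour : MeasurableSet
      {z : Fin 4 → ℝ | (S.queryArm : ℕ) + 1 < K ∧ τ ≤ (z 2 + z 3) / 2} :=
    (MeasurableSet.const _).inter
      (measurableSet_le_of_measurable τ (f := fun z ↦ (z 2 + z 3) / 2) (by fun_prop))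
  exact .ite (measurableSet_looksAbove τ) (.ite neighbour measurable_const measurable_const)
    (.ite right (.ite left measurable_const measurable_const)
      (.ite left measurable_const measurable_const))

lemma pastMeasurable_block (r : ℕ) : PastMeasurable (o + 4 * (r + 1)) fun y ↦ block o y r :=
  .pi fun _ ↦ .eval (by omega)

lemma pastMeasurable_searchState (r : ℕ) :
    PastMeasurable (o + 4 * r) (searchState (K := K) τ o r) := by
  induction r with
  | zero => exact .const _ _
  | succ r ih =>
    have step : Measurable fun p : SearchState K × (Fin 4 → ℝ) ↦ p.1.update (answer τ p.1 p.2) :=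
      measurable_from_prod_countable_right fun S ↦
        (Measurable.of_discrete (f := S.update)).comp (measurable_answer τ S)
    have next := PastMeasurable.comp step ((ih.mono (by omega)).prodMk (pastMeasurable_block o r))
    exact next

lemma pastMeasurable_searchDirection (μ : Fin K → ℝ) (r : ℕ) (e : Fin 3) :
    PastMeasurable (o + 4 * r) (searchDirection τ o μ r e) :=
  .comp (g := fun S : SearchState K ↦ critical τ μ S.queryArm e) .of_discrete
    (pastMeasurable_searchState τ o r)

lemma dependsOn_roundArms (S : SearchState K) (i : Fin 4) :
    DependsOn (fun z ↦ roundArms τ S z i) (Set.Iio i) := by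
  classical
  intro z z' h
  have first_test (hi : 2 ≤ i) : LooksAbove τ z = LooksAbove τ z' := by
    rw [LooksAbove, LooksAbove, h 0 (hi.trans_lt' (by simp)), h 1 (hi.trans_lt' (by decide))]
  match i with
  | 0 | 1 => rfl
  | 2 | 3 => simp [roundArms, first_test (by decide)]

lemma measurable_roundArms (i : Fin 4) :
    Measurable fun p : SearchState K × (Fin 4 → ℝ) ↦ roundArms τ p.1 p.2 i := by
  refine measurable_from_prod_countable_right fun S ↦ ?_
  let x := S.queryArm
  have select (a b : Fin K) :
      Measurable fun z : Fin 4 → ℝ ↦ open Classical in if LooksAbove τ z then a else b :=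
    .ite (measurableSet_looksAbove τ) measurable_const measurable_const
  match i with
  | 0 | 1 => exact measurable_const (a := S.queryArm)
  | 2 => exact select (armOr x (x + 1)) (armOr x (x - S.queryRadius))
  | 3 => exact select (armOr x (x + 1)) (armOr x (x + S.queryRadius))

lemma pastMeasurable_roundArms (r : ℕ) (i : Fin 4) : PastMeasurable (o + 4 * r + i)
    fun y ↦ roundArms τ (searchState (K := K) τ o r y) (block o y r) i := by
  have state := pastMeasurable_searchState (K := K) τ o r
  have measurable := (measurable_roundArms τ i).comp
    (state.measurable.prodMk (pastMeasurable_block o r).measurable)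
  refine ⟨measurable, fun y y' h ↦ ?_⟩
  rw [state.dependsOn fun j hj ↦ h j (hj.trans_le (Nat.le_add_right _ _))]
  refine dependsOn_roundArms τ _ i fun j hj ↦ h _ ?_
  simpa only [Set.mem_Iio, add_lt_add_iff_left, Fin.lt_def] using hj

lemma pastMeasurable_searchArm {q : ℕ} (hq : o ≤ q) :
    PastMeasurable q (searchArm (K := K) τ o q) :=
  (pastMeasurable_roundArms τ o ((q - o) / 4) (Fin.ofNat 4 (q - o))).mono <| by
    simp only [Fin.val_ofNat]
    omega

lemma searchArm_block (r : ℕ) (i : Fin 4) (y : ℕ → ℝ) :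
    searchArm τ o (o + 4 * r + i) y =
      roundArms τ (searchState (K := K) τ o r y) (block o y r) i := by
  have div : (o + 4 * r + i - o) / 4 = r := by omega
  have mod : Fin.ofNat 4 (o + 4 * r + i - o) = i := by
    ext; simp only [Fin.val_ofNat]; omega
  rw [searchArm, div, mod]

end Search

section Failure

variable {K : ℕ} [NeZero K] {ν : Fin K → Measure ℝ} [∀ k, SFinite (ν k)] {μ : Fin K → ℝ}
  {v τ Δ : ℝ} {φ : Fin K → Fin K} {A : ℕ → (ℕ → ℝ) → Fin K} {o n m T : ℕ}

lemma isBadRound_of_misleading (hμ : ConcaveSeq (μ ∘ φ)) (gap : ∀ k, Δ ≤ |μ k - τ|) {r : ℕ}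
    {y : ℕ → ℝ} (hAφ : ∀ i : Fin 4,
      A (o + 4 * r + i) y = φ (searchArm τ o (o + 4 * r + i) y))
    (misleading : (searchState (K := K) τ o r y).Misleading (lastAbove τ (μ ∘ φ))
      (answer τ (searchState (K := K) τ o r y) (block o y r))) :
    IsBadRound μ A o (searchDirection τ o (μ ∘ φ)) Δ y r := by
  contrapose! misleading
  refine not_misleading hμ (fun k ↦ gap (φ k)) fun e ↦ not_le.1 fun he ↦ misleading ⟨e, ?_⟩
  simp only [roundDeviation, hAφ, searchArm_block]
  exact he

lemma measure_search_failure_le (hν : ∀ k, IsSubGaussianArm v (μ k) (ν k)) (hv : 0 < v)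
    (hA : ∀ q, PastMeasurable q (A q)) (hμ : ConcaveSeq (μ ∘ φ))
    (hAφ : ∀ q, o ≤ q → q < o + 4 * (6 * m) → ∀ y, A q y = φ (searchArm τ o q y))
    (hΔ : 0 ≤ Δ) (gap : ∀ k, Δ ≤ |μ k - τ|) (hK : K < 2 ^ (m + 1)) (hn : 0 < n)
    (hT : n * (o + 4 * (6 * m)) ≤ T) :
    histMeasure ν (streamStrategy (batched n A)) T
        {h | ¬ (searchState τ o (6 * m) (batchMean n (extendByZero h))).Locates m
          (lastAbove τ (μ ∘ φ))} ≤
      ENNReal.ofReal (4 ^ (6 * m) * Real.exp (-(m * (Δ ^ 2 / (6 * (v / n)))))) := by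
  classical
  have many_bad := measure_many_badRounds_le hν hv hA
    (pastMeasurable_searchDirection τ o (μ ∘ φ)) (by norm_num : (0 : ℝ) < 3)
    (fun _ _ _ ↦ sum_critical_sq_le ..) hΔ hn hT m
  rw [Fintype.card_fin] at many_bad
  refine (measure_mono fun h failure ↦ ?_).trans (many_bad.trans_eq (by norm_num))
  by_contra few
  refine failure fun k ↦ SearchState.le_votes_run_iff (subsingleton_lastAbove ..) hK ?_ k
  refine lt_of_le_of_lt (card_le_card ?_) (not_le.1 few)
  refine monotone_filter_right _ fun r hr misleading ↦ ?_
  have := mem_range.1 hr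
  exact isBadRound_of_misleading hμ gap (fun i ↦ hAφ _ (by omega) (by omega) _) misleading

end Failure

/-! ### Two-sided search -/

section TwoSided

variable {K : ℕ} [NeZero K] (τ : ℝ)

/-- The search over `N` rounds for the last arm above the threshold, followed by the same search
in the reversed sequence of arms. -/
noncomputable def twoSidedArm (N q : ℕ) (y : ℕ → ℝ) : Fin K :=
  if q < 4 * N then searchArm τ 0 q y else Fin.rev (searchArm τ (4 * N) q y)

lemma pastMeasurable_twoSidedArm (N q : ℕ) :
    PastMeasurable q (twoSidedArm (K := K) τ N q) := by
  unfold twoSidedArm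
  split_ifs with hq
  · exact pastMeasurable_searchArm τ 0 q.zero_le
  · exact (pastMeasurable_searchArm τ (4 * N) (not_lt.1 hq)).comp .of_discrete

/-- The labels read off the final states `R` and `L` of the searches in the given and in the
reversed order: the arms that are neither to the right of all arms with `m` votes in `R` nor to
the left of all arms with `m` votes in `L` are labelled as above the threshold. -/
noncomputable def labels (m : ℕ) (R L : SearchState K) (k : Fin K) : Bool :=
  decide ((∃ j ≥ k, m ≤ R.votes j) ∧ ∃ j ≥ k.rev, m ≤ L.votes j)

/-- The labels of a two-sided search with `6 * m` rounds on each side, from batches of size `n`. -/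
noncomputable def twoSidedLabels (n m T : ℕ) (h : Fin T → ℝ) : Fin K → Bool :=
  labels m (searchState τ 0 (6 * m) (batchMean n (extendByZero h)))
    (searchState τ (4 * (6 * m)) (6 * m) (batchMean n (extendByZero h)))

lemma measurable_searchState_batchMean (n o N T : ℕ) : Measurable fun h : Fin T → ℝ ↦
    searchState (K := K) τ o N (batchMean n (extendByZero h)) :=
  ((pastMeasurable_searchState τ o N).comp_batchMean le_rfl).measurable.comp measurable_extendByZero

lemma measurable_twoSidedLabels (n m T : ℕ) : Measurable (twoSidedLabels (K := K) τ n m T) :=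
  (Measurable.of_discrete (f := fun S : SearchState K × SearchState K ↦ labels m S.1 S.2)).comp <|
    (measurable_searchState_batchMean τ n 0 (6 * m) T).prodMk
      (measurable_searchState_batchMean τ n (4 * (6 * m)) (6 * m) T)

end TwoSided

variable {K : ℕ} {μ : Fin K → ℝ} {τ : ℝ}

lemma exists_le_mem_lastAbove {k : Fin K} (hk : τ ≤ μ k) : ∃ j ≥ k, j ∈ lastAbove τ μ := by
  obtain ⟨j, hj⟩ := (Set.toFinite {i | τ ≤ μ i}).isCompact.exists_isGreatest ⟨k, hk⟩
  exact ⟨j, hj.2 hk, hj⟩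

lemma exists_lastAbove_iff (hμ : ConcaveSeq μ) (k : Fin K) :
    ((∃ j ≥ k, j ∈ lastAbove τ μ) ∧ ∃ j ≥ k.rev, j ∈ lastAbove τ (μ ∘ Fin.rev)) ↔ τ ≤ μ k := by
  refine ⟨fun ⟨⟨j, hkj, hj⟩, i, hki, hi⟩ ↦ ?_, fun hk ↦ ⟨exists_le_mem_lastAbove hk,
    exists_le_mem_lastAbove (by simpa using hk)⟩⟩
  exact (hμ.ordConnected_superlevel τ).out hi.1 hj.1 ⟨Fin.rev_le_iff.1 hki, hkj⟩

lemma labels_eq_true_iff [NeZero K] (hμ : ConcaveSeq μ) {m : ℕ} {R L : SearchState K}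
    (hR : R.Locates m (lastAbove τ μ)) (hL : L.Locates m (lastAbove τ (μ ∘ Fin.rev)))
    (k : Fin K) : labels m R L k = true ↔ τ ≤ μ k := by
  simp only [labels, decide_eq_true_eq, hR _, hL _, exists_lastAbove_iff hμ]

lemma measure_twoSided_error_le [NeZero K] {ν : Fin K → Measure ℝ} [∀ k, SFinite (ν k)]
    {v Δ : ℝ} {n m T : ℕ} (hν : ∀ k, IsSubGaussianArm v (μ k) (ν k)) (hv : 0 < v)
    (hμ : ConcaveSeq μ) (hΔ : 0 ≤ Δ) (gap : ∀ k, Δ ≤ |μ k - τ|) (hK : K < 2 ^ (m + 1))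
    (hn : 0 < n) (hT : n * (48 * m) ≤ T) :
    histMeasure ν (streamStrategy (batched n (twoSidedArm τ (6 * m)))) T
        (errSet (twoSidedLabels τ n m T) μ τ) ≤
      2 * ENNReal.ofReal (4 ^ (6 * m) * Real.exp (-(m * (Δ ^ 2 / (6 * (v / n)))))) := by
  have hA := pastMeasurable_twoSidedArm (K := K) τ (6 * m)
  have budget {N : ℕ} (hN : N ≤ 48 * m) : n * N ≤ T := (Nat.mul_le_mul_left n hN).trans hT
  have right := measure_search_failure_le (φ := id) (o := 0) hν hv hA hμ
    (fun q _ hq y ↦ if_pos (by omega)) hΔ gap hK hn (budget (by omega))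
  have left := measure_search_failure_le (φ := Fin.rev) (o := 4 * (6 * m)) hν hv hA hμ.rev
    (fun q hq _ y ↦ if_neg (by omega)) hΔ gap hK hn (budget (by omega))
  rw [two_mul]
  refine (measure_mono fun h error ↦ ?_).trans
    ((measure_union_le _ _).trans (add_le_add right left))
  by_contra success
  obtain ⟨hR, hL⟩ : _ ∧ _ := by simpa using success
  obtain ⟨k, hk⟩ := error
  exact hk (propext (labels_eq_true_iff hμ hR hL k))

lemma two_mul_failure_le {T n m : ℕ} (hm : 2 ^ m ≤ K) (hT : T ≤ 96 * m * n) (D σ : ℝ) :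
    2 * (4 ^ (6 * m) * Real.exp (-(m * (D ^ 2 / (6 * (σ ^ 2 / n)))))) ≤
      3 * Real.exp (-(1 / 576 : ℝ) * T * D ^ 2 / σ ^ 2 + 12 * Real.log K) := by
  have hK : (0 : ℝ) < K := Nat.cast_pos.2 ((Nat.two_pow_pos m).trans_le hm)
  have count : (4 : ℝ) ^ (6 * m) ≤ Real.exp (12 * Real.log K) :=
    calc (4 : ℝ) ^ (6 * m) = (2 ^ m) ^ 12 := by
          rw [show (4 : ℝ) = 2 ^ 2 by norm_num, ← pow_mul, ← pow_mul]; congr 1; ring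
      _ ≤ (K : ℝ) ^ 12 := by gcongr; exact_mod_cast hm
      _ = Real.exp (12 * Real.log K) := by
          rw [mul_comm, Real.exp_mul, Real.exp_log hK]; norm_cast
  have exponent : -(m * (D ^ 2 / (6 * (σ ^ 2 / n)))) ≤ -(1 / 576 : ℝ) * T * D ^ 2 / σ ^ 2 := by
    have hT : (T : ℝ) ≤ 96 * m * n := by exact_mod_cast hT
    calc -(m * (D ^ 2 / (6 * (σ ^ 2 / n))))
        = -(1 / 576 : ℝ) * (96 * m * n) * (D ^ 2 / σ ^ 2) := by
          rw [← mul_div_assoc 6, div_div_eq_mul_div]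
          ring
      _ ≤ -(1 / 576 : ℝ) * T * (D ^ 2 / σ ^ 2) := by
          gcongr ?_ * _
          linarith
      _ = -(1 / 576 : ℝ) * T * D ^ 2 / σ ^ 2 := by ring
  rw [Real.exp_add, mul_comm (Real.exp _) (Real.exp _)]
  gcongr
  norm_num

lemma forty_eight_mul_le {m T : ℕ} (hm : 2 ^ m ≤ K) (hT : 108 * Real.log K < T) : 48 * m ≤ T := by
  have hlog : m * Real.log 2 ≤ Real.log K := by
    rw [← Real.log_pow]
    exact Real.log_le_log (by positivity) (by exact_mod_cast hm)
  have : (48 * m : ℝ) ≤ T := by nlinarith [Real.log_two_gt_d9, m.cast_nonneg (α := ℝ)]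
  exact_mod_cast this

end ConcaveBandit

/-- Problem dependent upper bound for the concave thresholding bandit problem
(Theorem 4): for `T > 108 log K` there is a parameter free fixed-budget strategy (PD-CTB)
whose probability of error on every sub-Gaussian bandit problem with concave means is at
most `3·exp(−(1/576)·T·Δ_min²/σ² + 12·log K)`. -/
theorem concave_upper_bound
    (K T : ℕ) (hK : 3 ≤ K) (hT : 108 * Real.log K < T) (τ : ℝ) :
    ∃ (π : (t : ℕ) → (Fin t → ℝ) → Fin K) (Qhat : (Fin T → ℝ) → Fin K → Bool),
      (∀ t, Measurable (π t)) ∧ Measurable Qhat ∧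
      ∀ (σ : ℝ), 0 < σ → ∀ (ν : Fin K → Measure ℝ) (μ : Fin K → ℝ),
        (∀ k, IsProbabilityMeasure (ν k)) →
        (∀ k, ∫ x, x ∂ν k = μ k) →
        (∀ k, IsSubGaussianArm (σ ^ 2) (μ k) (ν k)) →
        ConcaveSeq μ →
        histMeasure ν π T (errSet Qhat μ τ) ≤
          ENNReal.ofReal (3 * Real.exp (-(1 / 576 : ℝ) * T * (⨅ k, |μ k - τ|) ^ 2 / σ ^ 2
            + 12 * Real.log K)) := by
  have : NeZero K := ⟨by omega⟩
  set m := Nat.log 2 K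
  set n := T / (48 * m)
  have hKm : 2 ^ m ≤ K := Nat.pow_log_le_self 2 (by omega)
  have hm : 0 < 48 * m := Nat.mul_pos (by norm_num) (Nat.log_pos (by norm_num) (by omega))
  have hn : 0 < n := Nat.div_pos (ConcaveBandit.forty_eight_mul_le hKm hT) hm
  have hTn : T ≤ 96 * m * n := by
    have remainder : T < 48 * m * (n + 1) := Nat.lt_mul_div_succ T hm
    nlinarith
  refine ⟨ConcaveBandit.streamStrategy (ConcaveBandit.batched n
    (ConcaveBandit.twoSidedArm τ (6 * m))), ConcaveBandit.twoSidedLabels τ n m T, fun t ↦ ?_,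
    ConcaveBandit.measurable_twoSidedLabels τ n m T, fun σ hσ ν μ _ _ hν hμ ↦ ?_⟩
  · exact (ConcaveBandit.PastMeasurable.batched
      (ConcaveBandit.pastMeasurable_twoSidedArm τ (6 * m)) n t).measurable.comp
      ConcaveBandit.measurable_extendByZero
  calc _ ≤ 2 * ENNReal.ofReal (4 ^ (6 * m) *
        Real.exp (-(m * ((⨅ k, |μ k - τ|) ^ 2 / (6 * (σ ^ 2 / n)))))) :=
      ConcaveBandit.measure_twoSided_error_le hν (by positivity) hμ
        (Real.iInf_nonneg fun _ ↦ abs_nonneg _) (ciInf_le (Set.finite_range _).bddBelow)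
        (Nat.lt_pow_succ_log_self (by norm_num) K) hn (Nat.div_mul_le_self T _)
    _ = ENNReal.ofReal (2 * _) := by rw [ENNReal.ofReal_mul zero_le_two, ENNReal.ofReal_ofNat]
    _ ≤ _ := ENNReal.ofReal_le_ofReal (ConcaveBandit.two_mul_failure_le hKm hTn _ _)
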